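/- Let E ∈ GL(m,k) and F ∈ GL(n,k), and assume B(E,F) ≠ 0. Let α : B(E,F) → B(E) ⊗ B(E,F) be the unique algebra homomorphism with α(z_{ij}) = Σ_{k=1}^m a_{ik} ⊗ z_{kj}. Then the linear map κ_l : B(E,F) ⊗ B(E,F) → B(E) ⊗ B(E,F) defined by κ_l = (id_{B(E)} ⊗ m_Z) ∘ (α ⊗ id_{B(E,F)}), where m_Z is the multiplication of B(E,F), is bijective. -/

import Mathlib

open scoped TensorProduct
open Matrix

noncomputable section

variable (k : Type) [Field k]

/-- The matrix of free generators of the free algebra on `Fin m × Fin n`. -/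
def gens (m n : ℕ) : Matrix (Fin m) (Fin n) (FreeAlgebra k (Fin m × Fin n)) :=
  Matrix.of fun i j => FreeAlgebra.ι k (i, j)

/-- A scalar matrix viewed as a matrix over a `k`-algebra. -/
def liftMat {A : Type} [Semiring A] [Algebra k A] {p q : ℕ}
    (M : Matrix (Fin p) (Fin q) k) : Matrix (Fin p) (Fin q) A :=
  M.map (algebraMap k A)

/-- The defining relations of the algebra `B(E,F)`:
`F⁻¹ * ᵀz * E * z = 1` and `z * F⁻¹ * ᵀz * E = 1`. -/
inductive BRel {m n : ℕ} (E : Matrix (Fin m) (Fin m) k) (F : Matrix (Fin n) (Fin n) k) :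
    FreeAlgebra k (Fin m × Fin n) → FreeAlgebra k (Fin m × Fin n) → Prop
  | left (i j : Fin n) : BRel E F
      ((liftMat k (A := FreeAlgebra k (Fin m × Fin n)) F⁻¹ * (gens k m n)ᵀ * liftMat k (A := FreeAlgebra k (Fin m × Fin n)) E * gens k m n :
          Matrix (Fin n) (Fin n) (FreeAlgebra k (Fin m × Fin n))) i j)
      ((1 : Matrix (Fin n) (Fin n) (FreeAlgebra k (Fin m × Fin n))) i j)
  | right (i j : Fin m) : BRel E F
      ((gens k m n * liftMat k (A := FreeAlgebra k (Fin m × Fin n)) F⁻¹ * (gens k m n)ᵀ * liftMat k (A := FreeAlgebra k (Fin m × Fin n)) E :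
          Matrix (Fin m) (Fin m) (FreeAlgebra k (Fin m × Fin n))) i j)
      ((1 : Matrix (Fin m) (Fin m) (FreeAlgebra k (Fin m × Fin n))) i j)

/-- The algebra `B(E,F)`.  The Hopf algebra `B(E)` is `BB k E E`. -/
abbrev BB {m n : ℕ} (E : Matrix (Fin m) (Fin m) k) (F : Matrix (Fin n) (Fin n) k) :=
  RingQuot (BRel k E F)

/-- The matrix of generators of `B(E,F)`. -/
def ZMat {m n : ℕ} (E : Matrix (Fin m) (Fin m) k) (F : Matrix (Fin n) (Fin n) k) :
    Matrix (Fin m) (Fin n) (BB k E F) :=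
  Matrix.of fun i j => RingQuot.mkAlgHom k (BRel k E F) (gens k m n i j)

section helpers

theorem liftMat_map' {A B : Type} [Semiring A] [Algebra k A] [Semiring B] [Algebra k B]
    (f : A →ₐ[k] B) {p q : ℕ} (M : Matrix (Fin p) (Fin q) k) :
    (liftMat k M : Matrix _ _ A).map f = liftMat k M := by
  ext i j
  simp [liftMat]

theorem liftMat_mul' {A : Type} [Semiring A] [Algebra k A] {p q r : ℕ}
    (M : Matrix (Fin p) (Fin q) k) (N : Matrix (Fin q) (Fin r) k) :
    liftMat k (A := A) M * liftMat k (A := A) N = liftMat k (A := A) (M * N) := by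
  rw [liftMat, liftMat, liftMat, Matrix.map_mul]

theorem liftMat_one' {A : Type} [Semiring A] [Algebra k A] {p : ℕ} :
    (liftMat k (1 : Matrix (Fin p) (Fin p) k) : Matrix _ _ A) = 1 := by
  simp [liftMat]

theorem BB_exists_lift {m n : ℕ}
    (E : Matrix (Fin m) (Fin m) k) (F : Matrix (Fin n) (Fin n) k)
    {A : Type} [Semiring A] [Algebra k A] (X : Matrix (Fin m) (Fin n) A)
    (h1 : liftMat k (A := A) F⁻¹ * Xᵀ * liftMat k (A := A) E * X = 1)
    (h2 : X * liftMat k (A := A) F⁻¹ * Xᵀ * liftMat k (A := A) E = 1) :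
    ∃ f : BB k E F →ₐ[k] A, ∀ i j, f (ZMat k E F i j) = X i j := by
  let f₀ : FreeAlgebra k (Fin m × Fin n) →ₐ[k] A := FreeAlgebra.lift k (fun p => X p.1 p.2)
  have hg : (gens k m n).map f₀ = X := by
    ext i j; simp [gens, f₀]
  have hr : ∀ ⦃x y⦄, BRel k E F x y → f₀ x = f₀ y := by
    intro x y h
    cases h with
    | left i j =>
      have := congrFun (congrFun h1 i) j
      rw [← hg, ← liftMat_map' k f₀, ← liftMat_map' k f₀, ← Matrix.transpose_map, ← Matrix.map_mul,
        ← Matrix.map_mul, ← Matrix.map_mul, ← Matrix.map_one f₀ (map_zero _) (map_one _)] at this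
      exact this
    | right i j =>
      have := congrFun (congrFun h2 i) j
      rw [← hg, ← liftMat_map' k f₀, ← liftMat_map' k f₀, ← Matrix.transpose_map, ← Matrix.map_mul,
        ← Matrix.map_mul, ← Matrix.map_mul, ← Matrix.map_one f₀ (map_zero _) (map_one _)] at this
      exact this
  refine ⟨RingQuot.liftAlgHom k ⟨f₀, hr⟩, fun i j => ?_⟩
  have : ZMat k E F i j = RingQuot.mkAlgHom k (BRel k E F) (gens k m n i j) := rfl
  rw [this, RingQuot.liftAlgHom_mkAlgHom_apply]
  simp [gens, f₀]

theorem ZMat_left {m n : ℕ} (E : Matrix (Fin m) (Fin m) k) (F : Matrix (Fin n) (Fin n) k) :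
    liftMat k (A := BB k E F) F⁻¹ * (ZMat k E F)ᵀ * liftMat k (A := BB k E F) E * ZMat k E F = 1 := by
  let f := RingQuot.mkAlgHom k (BRel k E F)
  have hg : ZMat k E F = (gens k m n).map f := rfl
  rw [hg, ← liftMat_map' k f, ← liftMat_map' k f, ← Matrix.transpose_map, ← Matrix.map_mul,
        ← Matrix.map_mul, ← Matrix.map_mul, ← Matrix.map_one f (map_zero _) (map_one _)]
  ext i j
  exact RingQuot.mkAlgHom_rel k (BRel.left i j)

theorem ZMat_right {m n : ℕ} (E : Matrix (Fin m) (Fin m) k) (F : Matrix (Fin n) (Fin n) k) :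
    ZMat k E F * liftMat k (A := BB k E F) F⁻¹ * (ZMat k E F)ᵀ * liftMat k (A := BB k E F) E = 1 := by
  let f := RingQuot.mkAlgHom k (BRel k E F)
  have hg : ZMat k E F = (gens k m n).map f := rfl
  rw [hg, ← liftMat_map' k f, ← liftMat_map' k f, ← Matrix.transpose_map, ← Matrix.map_mul,
        ← Matrix.map_mul, ← Matrix.map_mul, ← Matrix.map_one f (map_zero _) (map_one _)]
  ext i j
  exact RingQuot.mkAlgHom_rel k (BRel.right i j)

theorem BB_induction {m n : ℕ} (E : Matrix (Fin m) (Fin m) k) (F : Matrix (Fin n) (Fin n) k)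
    {P : BB k E F → Prop} (h0 : ∀ r, P (algebraMap k _ r)) (h1 : ∀ i j, P (ZMat k E F i j))
    (hm : ∀ a b, P a → P b → P (a * b)) (ha : ∀ a b, P a → P b → P (a + b)) (x : BB k E F) :
    P x := by
  obtain ⟨x, rfl⟩ := RingQuot.mkAlgHom_surjective k (BRel k E F) x
  induction x using FreeAlgebra.induction with
  | grade0 r => rw [AlgHom.commutes]; exact h0 r
  | grade1 p => exact h1 p.1 p.2
  | mul a b ha hb => rw [map_mul]; exact hm _ _ ha hb
  | add a b h h' => rw [map_add]; exact ha _ _ h h'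

open MulOpposite in
theorem BB_exists_beta {m n : ℕ}
    (E : Matrix (Fin m) (Fin m) k) (F : Matrix (Fin n) (Fin n) k)
    (hE : IsUnit E.det) (hF : IsUnit F.det) :
    ∃ w : Matrix (Fin n) (Fin m) (BB k E F), w * ZMat k E F = 1 ∧ ZMat k E F * w = 1 ∧
    ∃ f : BB k E E →ₐ[k] (BB k E F ⊗[k] (BB k E F)ᵐᵒᵖ), ∀ i j, f (ZMat k E E i j) =
      ∑ l, ZMat k E F i l ⊗ₜ[k] op (w l j) := by
  set Z := ZMat k E F with hZ
  set w : Matrix (Fin n) (Fin m) (BB k E F) := liftMat k (A := BB k E F) F⁻¹ * Zᵀ * liftMat k (A := BB k E F) E with hw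
  have hwz : w * Z = 1 := ZMat_left k E F
  have hzw : Z * w = 1 := by
    rw [hw, ← Matrix.mul_assoc, ← Matrix.mul_assoc]; exact ZMat_right k E F
  let iL : BB k E F →ₐ[k] (BB k E F ⊗[k] (BB k E F)ᵐᵒᵖ) :=
    Algebra.TensorProduct.includeLeft
  let iR : (BB k E F)ᵐᵒᵖ →ₐ[k] (BB k E F ⊗[k] (BB k E F)ᵐᵒᵖ) :=
    Algebra.TensorProduct.includeRight
  let Y := Z.map iL
  let V := Z.map (fun x => iR (op x))
  let W := w.map (fun x => iR (op x))
  have hcomm : ∀ x y, iL x * iR y = iR y * iL x := by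
    intro x y; simp [iL, iR]
  have hFF : liftMat k (A := BB k E F ⊗[k] (BB k E F)ᵐᵒᵖ) F * liftMat k (A := BB k E F ⊗[k] (BB k E F)ᵐᵒᵖ) F⁻¹ = 1 := by
    rw [liftMat_mul', Matrix.mul_nonsing_inv _ hF, liftMat_one']
  have hEE : liftMat k (A := BB k E F ⊗[k] (BB k E F)ᵐᵒᵖ) E * liftMat k (A := BB k E F ⊗[k] (BB k E F)ᵐᵒᵖ) E⁻¹ = 1 := by
    rw [liftMat_mul', Matrix.mul_nonsing_inv _ hE, liftMat_one']
  have hEE' : liftMat k (A := BB k E F ⊗[k] (BB k E F)ᵐᵒᵖ) E⁻¹ * liftMat k (A := BB k E F ⊗[k] (BB k E F)ᵐᵒᵖ) E = 1 := by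
    rw [liftMat_mul', Matrix.nonsing_inv_mul _ hE, liftMat_one']
  have hY1 : liftMat k (A := BB k E F ⊗[k] (BB k E F)ᵐᵒᵖ) F⁻¹ * Yᵀ * liftMat k (A := BB k E F ⊗[k] (BB k E F)ᵐᵒᵖ) E * Y = 1 := by
    have := congrArg (fun M => M.map iL) (ZMat_left k E F)
    simpa only [Matrix.map_mul, liftMat_map', Matrix.transpose_map,
      Matrix.map_one iL (map_zero _) (map_one _)] using this
  have hY2 : Y * liftMat k (A := BB k E F ⊗[k] (BB k E F)ᵐᵒᵖ) F⁻¹ * Yᵀ * liftMat k (A := BB k E F ⊗[k] (BB k E F)ᵐᵒᵖ) E = 1 := by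
    have := congrArg (fun M => M.map iL) (ZMat_right k E F)
    simpa only [Matrix.map_mul, liftMat_map', Matrix.transpose_map,
      Matrix.map_one iL (map_zero _) (map_one _)] using this
  have hY3 : Yᵀ * liftMat k (A := BB k E F ⊗[k] (BB k E F)ᵐᵒᵖ) E * Y = liftMat k (A := BB k E F ⊗[k] (BB k E F)ᵐᵒᵖ) F := by
    have := congrArg (fun M => liftMat k (A := BB k E F ⊗[k] (BB k E F)ᵐᵒᵖ) F * M) hY1
    simpa only [Matrix.mul_assoc, ← Matrix.mul_assoc (liftMat k (A := BB k E F ⊗[k] (BB k E F)ᵐᵒᵖ) F) (liftMat k (A := BB k E F ⊗[k] (BB k E F)ᵐᵒᵖ) F⁻¹), hFF,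
      Matrix.one_mul, Matrix.mul_one] using this
  have hW : W = liftMat k (A := BB k E F ⊗[k] (BB k E F)ᵐᵒᵖ) F⁻¹ * Vᵀ * liftMat k (A := BB k E F ⊗[k] (BB k E F)ᵐᵒᵖ) E := by
    ext i j
    simp only [W, V, hw, Matrix.map_apply, Matrix.mul_apply, Matrix.transpose_apply, Finset.op_sum,
      map_sum, op_mul, map_mul, liftMat, Finset.sum_mul, Finset.mul_sum, ← MulOpposite.algebraMap_apply,
      AlgHom.commutes]
    refine Finset.sum_congr rfl fun x _ => Finset.sum_congr rfl fun y _ => ?_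
    rw [Algebra.commutes (E x j), ← Algebra.commutes (F⁻¹ i y)]
  have hVW : Vᵀ * Wᵀ = 1 := by
    ext i j
    have := congrArg (fun x => iR (op x)) (congrFun (congrFun hwz j) i)
    simp only [Matrix.mul_apply, Finset.op_sum, op_mul, map_sum, map_mul] at this
    simp only [Matrix.mul_apply, V, W, Matrix.transpose_apply, Matrix.map_apply, this]
    simp only [Matrix.one_apply, eq_comm]
    split_ifs <;> simp
  have hWV : Wᵀ * Vᵀ = 1 := by
    ext i j
    have := congrArg (fun x => iR (op x)) (congrFun (congrFun hzw j) i)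
    simp only [Matrix.mul_apply, Finset.op_sum, op_mul, map_sum, map_mul] at this
    simp only [Matrix.mul_apply, V, W, Matrix.transpose_apply, Matrix.map_apply, this]
    simp only [Matrix.one_apply, eq_comm]
    split_ifs <;> simp
  have hT : (Y * W)ᵀ = Wᵀ * Yᵀ := by
    ext i j
    simp only [Matrix.mul_apply, Matrix.transpose_apply, Y, W, Matrix.map_apply, hcomm]
  have hFW : liftMat k (A := BB k E F ⊗[k] (BB k E F)ᵐᵒᵖ) F * W = Vᵀ * liftMat k (A := BB k E F ⊗[k] (BB k E F)ᵐᵒᵖ) E := by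
    rw [hW, Matrix.mul_assoc, ← Matrix.mul_assoc, hFF, Matrix.one_mul]
  have hWE : W * liftMat k (A := BB k E F ⊗[k] (BB k E F)ᵐᵒᵖ) E⁻¹ = liftMat k (A := BB k E F ⊗[k] (BB k E F)ᵐᵒᵖ) F⁻¹ * Vᵀ := by
    rw [hW, Matrix.mul_assoc, hEE, Matrix.mul_one]
  obtain ⟨f, hf⟩ := BB_exists_lift k E E (Y * W) (by
    calc liftMat k (A := BB k E F ⊗[k] (BB k E F)ᵐᵒᵖ) E⁻¹ * (Y * W)ᵀ * liftMat k (A := BB k E F ⊗[k] (BB k E F)ᵐᵒᵖ) E * (Y * W)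
        = liftMat k (A := BB k E F ⊗[k] (BB k E F)ᵐᵒᵖ) E⁻¹ * (Wᵀ * ((Yᵀ * liftMat k (A := BB k E F ⊗[k] (BB k E F)ᵐᵒᵖ) E * Y) * W)) := by
          rw [hT]; simp only [Matrix.mul_assoc]
      _ = liftMat k (A := BB k E F ⊗[k] (BB k E F)ᵐᵒᵖ) E⁻¹ * ((Wᵀ * Vᵀ) * liftMat k (A := BB k E F ⊗[k] (BB k E F)ᵐᵒᵖ) E) := by
          rw [hY3, hFW]; simp only [Matrix.mul_assoc]
      _ = 1 := by rw [hWV, Matrix.one_mul, hEE']) (by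
    calc (Y * W) * liftMat k (A := BB k E F ⊗[k] (BB k E F)ᵐᵒᵖ) E⁻¹ * (Y * W)ᵀ * liftMat k (A := BB k E F ⊗[k] (BB k E F)ᵐᵒᵖ) E
        = Y * ((W * liftMat k (A := BB k E F ⊗[k] (BB k E F)ᵐᵒᵖ) E⁻¹) * (Wᵀ * (Yᵀ * liftMat k (A := BB k E F ⊗[k] (BB k E F)ᵐᵒᵖ) E))) := by
          rw [hT]; simp only [Matrix.mul_assoc]
      _ = Y * (liftMat k (A := BB k E F ⊗[k] (BB k E F)ᵐᵒᵖ) F⁻¹ * ((Vᵀ * Wᵀ) * (Yᵀ * liftMat k (A := BB k E F ⊗[k] (BB k E F)ᵐᵒᵖ) E))) := by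
          rw [hWE]; simp only [Matrix.mul_assoc]
      _ = Y * liftMat k (A := BB k E F ⊗[k] (BB k E F)ᵐᵒᵖ) F⁻¹ * Yᵀ * liftMat k (A := BB k E F ⊗[k] (BB k E F)ᵐᵒᵖ) E := by
          rw [hVW, Matrix.one_mul]; simp only [Matrix.mul_assoc]
      _ = 1 := hY2)
  refine ⟨w, hwz, hzw, f, fun i j => ?_⟩
  rw [hf]
  simp [Matrix.mul_apply, Y, W, iL, iR]

end helpers

/-- **Statement 8.** If `B(E,F) ≠ 0` then the left Galois map
`κₗ = (id ⊗ m) ∘ (α ⊗ id) : B(E,F) ⊗ B(E,F) → B(E) ⊗ B(E,F)` is bijective, where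
`α` is the unique algebra homomorphism with `α(z i j) = ∑ l, a i l ⊗ z l j`. -/
theorem BB_left_galois_bijective {m n : ℕ}
    (E : Matrix (Fin m) (Fin m) k) (F : Matrix (Fin n) (Fin n) k)
    (hE : IsUnit E.det) (hF : IsUnit F.det)
    (hnz : (1 : BB k E F) ≠ 0)
    (α : BB k E F →ₐ[k] (BB k E E ⊗[k] BB k E F))
    (hα : ∀ i j, α (ZMat k E F i j) = ∑ l, ZMat k E E i l ⊗ₜ[k] ZMat k E F l j) :
    Function.Bijective
      ((LinearMap.lTensor (BB k E E) (LinearMap.mul' k (BB k E F))) ∘ₗ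
        (TensorProduct.assoc k (BB k E E) (BB k E F) (BB k E F)).toLinearMap ∘ₗ
        (LinearMap.rTensor (BB k E F) α.toLinearMap) :
        (BB k E F ⊗[k] BB k E F) →ₗ[k] (BB k E E ⊗[k] BB k E F)) := by
  classical
  obtain ⟨w, hwz, hzw, β, hβ⟩ := BB_exists_beta k E F hE hF
  have hzw' : ∀ x j, ∑ l, ZMat k E F x l * w l j = if x = j then 1 else 0 := fun x j => by
    rw [← Matrix.mul_apply, hzw, Matrix.one_apply]
  have hwz' : ∀ x j, ∑ l, w x l * ZMat k E F l j = if x = j then 1 else 0 := fun x j => by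
    rw [← Matrix.mul_apply, hwz, Matrix.one_apply]
  set κ : (BB k E F ⊗[k] BB k E F) →ₗ[k] (BB k E E ⊗[k] BB k E F) :=
      ((LinearMap.lTensor (BB k E E) (LinearMap.mul' k (BB k E F))) ∘ₗ
        (TensorProduct.assoc k (BB k E E) (BB k E F) (BB k E F)).toLinearMap ∘ₗ
        (LinearMap.rTensor (BB k E F) α.toLinearMap)) with hκ
  have κ_apply : ∀ u v, κ (u ⊗ₜ v) = α u * (1 ⊗ₜ v) := by
    intro u v
    simp only [hκ, LinearMap.comp_apply, LinearMap.rTensor_tmul, AlgHom.toLinearMap_apply]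
    induction α u using TensorProduct.induction_on with
    | zero => simp
    | tmul a b => simp
    | add x y hx hy => rw [TensorProduct.add_tmul, map_add, map_add, hx, hy, add_mul]
  -- forget the opposite
  let U : (BB k E F ⊗[k] (BB k E F)ᵐᵒᵖ) →ₗ[k] (BB k E F ⊗[k] BB k E F) :=
    LinearMap.lTensor _ (MulOpposite.opLinearEquiv k).symm.toLinearMap
  have U_apply : ∀ p q, U (p ⊗ₜ MulOpposite.op q) = p ⊗ₜ q := by intro p q; simp [U]
  let η : (BB k E E ⊗[k] BB k E F) →ₗ[k] (BB k E F ⊗[k] BB k E F) :=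
    (LinearMap.lTensor (BB k E F) (LinearMap.mul' k (BB k E F))) ∘ₗ
        (TensorProduct.assoc k (BB k E F) (BB k E F) (BB k E F)).toLinearMap ∘ₗ
        (LinearMap.rTensor (BB k E F) (U ∘ₗ β.toLinearMap))
  have η_apply : ∀ a v, η (a ⊗ₜ v) = U (β a) * (1 ⊗ₜ v) := by
    intro u v
    simp only [η, LinearMap.comp_apply, LinearMap.rTensor_tmul, AlgHom.toLinearMap_apply,
      LinearEquiv.coe_coe]
    induction U (β u) using TensorProduct.induction_on with
    | zero => simp
    | tmul a b => simp
    | add x y hx hy => rw [TensorProduct.add_tmul, map_add, map_add, hx, hy, add_mul]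
  have κ_mul : ∀ x v, κ (x * (1 ⊗ₜ v)) = κ x * (1 ⊗ₜ v) := by
    intro x v
    induction x using TensorProduct.induction_on with
    | zero => simp
    | tmul a b => simp [κ_apply, mul_assoc]
    | add x y hx hy => rw [add_mul, map_add, hx, hy, map_add, add_mul]
  have η_mul : ∀ x v, η (x * (1 ⊗ₜ v)) = η x * (1 ⊗ₜ v) := by
    intro x v
    induction x using TensorProduct.induction_on with
    | zero => simp
    | tmul a b => simp [η_apply, mul_assoc]
    | add x y hx hy => rw [add_mul, map_add, hx, hy, map_add, add_mul]
  -- first identity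
  have key1 : ∀ x y b, κ (U y) = b ⊗ₜ 1 → κ (U (x * y)) = κ (U x) * (b ⊗ₜ 1) := by
    intro x y b h
    induction x using TensorProduct.induction_on with
    | zero => simp
    | add x x' hx hx' => rw [add_mul, map_add, map_add, hx, hx', map_add, map_add, add_mul]
    | tmul p q =>
      induction q using MulOpposite.rec' with
      | h q =>
      have : ∀ y, κ (U ((p ⊗ₜ MulOpposite.op q) * y)) = α p * κ (U y) * (1 ⊗ₜ q) := by
        intro y
        induction y using TensorProduct.induction_on with
        | zero => simp
        | add x x' hx hx' =>
          rw [mul_add, map_add, map_add, hx, hx', map_add, map_add, mul_add, add_mul]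
        | tmul p' q' =>
          induction q' using MulOpposite.rec' with
          | h q' =>
          rw [Algebra.TensorProduct.tmul_mul_tmul, ← MulOpposite.op_mul, U_apply, U_apply,
            κ_apply, κ_apply, map_mul]
          simp [mul_assoc]
      rw [this, h, U_apply, κ_apply, mul_assoc, mul_assoc]
      simp
  have id1 : ∀ a, κ (U (β a)) = a ⊗ₜ 1 := by
    intro a
    induction a using BB_induction with
    | h0 r =>
      rw [AlgHom.commutes, Algebra.algebraMap_eq_smul_one, Algebra.algebraMap_eq_smul_one,
        map_smul, map_smul, Algebra.TensorProduct.one_def, ← MulOpposite.op_one, U_apply, κ_apply,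
        map_one, one_mul, TensorProduct.smul_tmul']
    | h1 i j =>
      rw [hβ, map_sum, map_sum]
      simp only [U_apply, κ_apply, hα, Finset.sum_mul, Algebra.TensorProduct.tmul_mul_tmul, mul_one]
      rw [Finset.sum_comm]
      simp only [← TensorProduct.tmul_sum]
      simp only [hzw', TensorProduct.tmul_ite, TensorProduct.tmul_zero]
      simp
    | hm a b ha hb =>
      rw [map_mul, key1 _ _ _ hb, ha]; simp
    | ha a b ha hb =>
      rw [map_add, map_add, map_add, ha, hb, TensorProduct.add_tmul]
  have key2 : ∀ x y u, η x = u ⊗ₜ 1 → η (x * y) = (u ⊗ₜ 1) * η y := by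
    intro x y u h
    induction y using TensorProduct.induction_on with
    | zero => simp
    | add y y' hy hy' => rw [mul_add, map_add, hy, hy', map_add, mul_add]
    | tmul a' z' =>
      let L : (BB k E F ⊗[k] (BB k E F)ᵐᵒᵖ) →ₗ[k]
          (BB k E F ⊗[k] BB k E F) →ₗ[k] (BB k E F ⊗[k] BB k E F) :=
        TensorProduct.lift ((TensorProduct.mapBilinear (RingHom.id k) _ _ _ _).compl₁₂
          (LinearMap.mul k (BB k E F)).flip
          ((LinearMap.mul k (BB k E F)) ∘ₗ (MulOpposite.opLinearEquiv k).symm.toLinearMap))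
      have L_apply : ∀ p q r s, L (p ⊗ₜ MulOpposite.op q) (r ⊗ₜ s) = (r * p) ⊗ₜ (q * s) := by
        intro p q r s; simp [L]
      have hL1 : ∀ s t v, U (s * t) * (1 ⊗ₜ v) = L t (U s * (1 ⊗ₜ v)) := by
        intro s t v
        induction t using TensorProduct.induction_on with
        | zero => simp
        | add y y' hy hy' => rw [mul_add, map_add, add_mul, hy, hy', map_add, LinearMap.add_apply]
        | tmul p q =>
        induction q using MulOpposite.rec' with
        | h q =>
        induction s using TensorProduct.induction_on with
        | zero => simp
        | add y y' hy hy' => rw [add_mul, map_add, add_mul, hy, hy', map_add, add_mul, map_add]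
        | tmul p' q' =>
        induction q' using MulOpposite.rec' with
        | h q' =>
        rw [Algebra.TensorProduct.tmul_mul_tmul, ← MulOpposite.op_mul, U_apply, U_apply]
        simp [L_apply, mul_assoc]
      have hL2 : ∀ t, L t (u ⊗ₜ 1) = (u ⊗ₜ 1) * U t := by
        intro t
        induction t using TensorProduct.induction_on with
        | zero => simp
        | add y y' hy hy' => rw [map_add, LinearMap.add_apply, hy, hy', map_add, mul_add]
        | tmul p q =>
        induction q using MulOpposite.rec' with
        | h q => rw [L_apply, U_apply]; simp
      have hL3 : ∀ x, η (x * (a' ⊗ₜ z')) = L (β a') (η x) * (1 ⊗ₜ z') := by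
        intro x
        induction x using TensorProduct.induction_on with
        | zero => simp
        | add y y' hy hy' => rw [add_mul, map_add, hy, hy', map_add, map_add, add_mul]
        | tmul a z =>
          have e : (1 : BB k E F) ⊗ₜ[k] (z * z') = (1 ⊗ₜ z) * (1 ⊗ₜ z') := by simp
          rw [Algebra.TensorProduct.tmul_mul_tmul, η_apply, η_apply, map_mul, e, ← mul_assoc, hL1]
      rw [hL3, h, hL2, η_apply, mul_assoc]
  have id2 : ∀ u, η (α u) = u ⊗ₜ 1 := by
    intro a
    induction a using BB_induction with
    | h0 r =>
      rw [AlgHom.commutes, Algebra.algebraMap_eq_smul_one, Algebra.algebraMap_eq_smul_one,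
        map_smul, Algebra.TensorProduct.one_def, η_apply, map_one,
        Algebra.TensorProduct.one_def, ← MulOpposite.op_one, U_apply,
        Algebra.TensorProduct.tmul_mul_tmul, mul_one, TensorProduct.smul_tmul']
    | h1 i j =>
      rw [hα, map_sum]
      simp only [η_apply, hβ, map_sum, U_apply, Finset.sum_mul,
        Algebra.TensorProduct.tmul_mul_tmul, mul_one]
      rw [Finset.sum_comm]
      simp only [← TensorProduct.tmul_sum]
      simp only [hwz', TensorProduct.tmul_ite, TensorProduct.tmul_zero]
      simp
    | hm a b ha hb =>
      rw [map_mul, key2 _ _ _ ha, hb]; simp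
    | ha a b ha hb =>
      rw [map_add, map_add, ha, hb, TensorProduct.add_tmul]
  refine Function.bijective_iff_has_inverse.2 ⟨η, fun x => ?_, fun x => ?_⟩
  · induction x using TensorProduct.induction_on with
    | zero => simp
    | tmul u v => rw [κ_apply, η_mul, id2]; simp
    | add x y hx hy => rw [map_add, map_add, hx, hy]
  · induction x using TensorProduct.induction_on with
    | zero => simp
    | tmul u v => rw [η_apply, κ_mul, id1]; simp
    | add x y hx hy => rw [map_add, map_add, hx, hy]
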